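/- arXiv:2510.26654 — 4 statements merged into one kernel-verified Lean document; each statement's English description precedes it below -/
import Mathlib

section
/- Let ι be a type of propositional variables, T and A theories (sets of worlds), and W ⊆ ι a vocabulary. Define wsc(A;T;W) := {w | for every world w' that agrees with w on every variable in W, if w' ∈ T then w' ∈ A}. Then: (1) wsc(A;T;W) is a theory over W; (2) wsc(A;T;W) is a sufficient condition over W of A under T, i.e., T ∩ wsc(A;T;W) ⊆ A; (3) it is weakest: for every theory C over W with T ∩ C ⊆ A, one has T ∩ C ⊆ wsc(A;T;W). -/
def Agrees {ι : Type*} (W : Set ι) (w w' : ι → Bool) : Prop := ∀ i ∈ W, w i = w' i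

def IsOver {ι : Type*} (T : Set (ι → Bool)) (W : Set ι) : Prop :=
  ∀ w w', Agrees W w w' → (w ∈ T ↔ w' ∈ T)

def snc {ι : Type*} (A T : Set (ι → Bool)) (W : Set ι) : Set (ι → Bool) :=
  {w | ∃ w', w' ∈ T ∧ w' ∈ A ∧ Agrees W w' w}

def wsc {ι : Type*} (A T : Set (ι → Bool)) (W : Set ι) : Set (ι → Bool) :=
  {w | ∀ w', Agrees W w w' → w' ∈ T → w' ∈ A}

namespace Agrees

variable {ι : Type*} {W : Set ι} {u v w : ι → Bool}

theorem refl (W : Set ι) (w : ι → Bool) : Agrees W w w :=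
  fun _ _ => rfl

theorem symm (h : Agrees W u v) : Agrees W v u :=
  fun i hi => (h i hi).symm

theorem trans (huv : Agrees W u v) (hvw : Agrees W v w) : Agrees W u w :=
  fun i hi => (huv i hi).trans (hvw i hi)

end Agrees

section WeakestSufficientCondition

variable {ι : Type*}

theorem isOver_wsc (A T : Set (ι → Bool)) (W : Set ι) : IsOver (wsc A T W) W :=
  fun _ _ hww' => ⟨fun hw v hw'v => hw v (hww'.trans hw'v),
    fun hw' v hwv => hw' v (hww'.symm.trans hwv)⟩

theorem inter_wsc_subset (A T : Set (ι → Bool)) (W : Set ι) : T ∩ wsc A T W ⊆ A :=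
  fun w ⟨hwT, hw⟩ => hw w (Agrees.refl W w) hwT

theorem IsOver.subset_wsc {A T C : Set (ι → Bool)} {W : Set ι} (hC : IsOver C W)
    (hTC : T ∩ C ⊆ A) : C ⊆ wsc A T W := by
  intro w hwC w' hww' hw'T
  have hw'C : w' ∈ C := (hC w w' hww').mp hwC
  exact hTC ⟨hw'T, hw'C⟩

end WeakestSufficientCondition

theorem wsc_spec {ι : Type*} (T A : Set (ι → Bool)) (W : Set ι) :
    IsOver (wsc A T W) W ∧
    T ∩ wsc A T W ⊆ A ∧
    (∀ C : Set (ι → Bool), IsOver C W → T ∩ C ⊆ A → T ∩ C ⊆ wsc A T W) :=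
  ⟨isOver_wsc A T W, inter_wsc_subset A T W,
    fun _ hC hTC => Set.inter_subset_right.trans (hC.subset_wsc hTC)⟩
end

section
/- Let ι be a type of propositional variables, T and A theories (sets of worlds), and W ⊆ ι a vocabulary. Then ⟨wsc(A;T;W), snc(A;T;W)⟩ is the tightest approximation of A over W under T: every sufficient condition C over W of A under T satisfies T ∩ C ⊆ wsc(A;T;W), and every necessary condition D over W of A under T satisfies T ∩ snc(A;T;W) ⊆ D. -/
namespace IsOver

variable {ι : Type*} {A C D T : Set (ι → Bool)} {W : Set ι}

theorem subset_wsc_s3 (hC : IsOver C W) (hCA : T ∩ C ⊆ A) : C ⊆ wsc A T W := by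
  intro w hwC w' hagree hw'T
  have hw'C : w' ∈ C := (hC w w' hagree).mp hwC
  exact hCA ⟨hw'T, hw'C⟩

theorem snc_subset (hD : IsOver D W) (hAD : T ∩ A ⊆ D) : snc A T W ⊆ D := by
  rintro w ⟨w', hw'T, hw'A, hagree⟩
  have hw'D : w' ∈ D := hAD ⟨hw'T, hw'A⟩
  exact (hD w' w hagree).mp hw'D

end IsOver

theorem wsc_snc_tightest_approximation {ι : Type*} (T A : Set (ι → Bool)) (W : Set ι) :
    (∀ C : Set (ι → Bool), IsOver C W → T ∩ C ⊆ A → T ∩ C ⊆ wsc A T W) ∧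
    (∀ D : Set (ι → Bool), IsOver D W → T ∩ A ⊆ D → T ∩ snc A T W ⊆ D) := by
  constructor
  · intro C hC hCA
    exact Set.inter_subset_right.trans (hC.subset_wsc_s3 hCA)
  · intro D hD hAD
    exact Set.inter_subset_right.trans (hD.snc_subset hAD)
end

section
/- Let ι be a type of propositional variables, T_S a source theory, T_B a bridging theory, and V_A ⊆ ι a vocabulary. If ⟨T1^l, T1^u⟩ and ⟨T2^l, T2^u⟩ are both tightest abstractions from T_S with respect to T_B over V_A, then their bounds are equivalent under T_B: T_B ∩ T1^l = T_B ∩ T2^l and T_B ∩ T1^u = T_B ∩ T2^u. -/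
/-- `⟨l, u⟩` is a tightest abstraction of the source `s` with respect to the bridge `b`, among the
elements of `P`. Theories are ordered by inclusion of their sets of models, so entailment is `≤` and
conjunction is `⊓`; `P` stands for the theories over the abstraction vocabulary. -/
structure IsTightestAbstraction {α : Type*} [SemilatticeInf α] (P : Set α) (b s l u : α) :
    Prop where
  lower_mem : l ∈ P
  upper_mem : u ∈ P
  inf_le_source_iff : ∀ c ∈ P, b ⊓ c ≤ s ↔ b ⊓ c ≤ l
  inf_source_le_iff : ∀ d ∈ P, b ⊓ s ≤ d ↔ b ⊓ u ≤ d

namespace IsTightestAbstraction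

variable {α : Type*} [SemilatticeInf α] {P : Set α} {b s l u : α}

theorem isGreatest_inf_lower (h : IsTightestAbstraction P b s l u) :
    IsGreatest ((b ⊓ ·) '' {c ∈ P | b ⊓ c ≤ s}) (b ⊓ l) := by
  constructor
  · have sufficient : b ⊓ l ≤ s := (h.inf_le_source_iff l h.lower_mem).2 inf_le_right
    exact ⟨l, ⟨h.lower_mem, sufficient⟩, rfl⟩
  · rintro _ ⟨c, ⟨hc, hcs⟩, rfl⟩
    exact le_inf inf_le_left ((h.inf_le_source_iff c hc).1 hcs)

theorem isLeast_inf_upper (h : IsTightestAbstraction P b s l u) :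
    IsLeast ((b ⊓ ·) '' {d ∈ P | b ⊓ s ≤ d}) (b ⊓ u) := by
  constructor
  · have necessary : b ⊓ s ≤ u := (h.inf_source_le_iff u h.upper_mem).2 inf_le_right
    exact ⟨u, ⟨h.upper_mem, necessary⟩, rfl⟩
  · rintro _ ⟨d, ⟨hd, hsd⟩, rfl⟩
    exact le_inf inf_le_left ((h.inf_source_le_iff d hd).1 hsd)

end IsTightestAbstraction

theorem tightest_abstraction_unique_general {α : Type*} [SemilatticeInf α] {P : Set α}
    {b s l₁ u₁ l₂ u₂ : α} (h₁ : IsTightestAbstraction P b s l₁ u₁)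
    (h₂ : IsTightestAbstraction P b s l₂ u₂) :
    b ⊓ l₁ = b ⊓ l₂ ∧ b ⊓ u₁ = b ⊓ u₂ :=
  ⟨h₁.isGreatest_inf_lower.unique h₂.isGreatest_inf_lower,
    h₁.isLeast_inf_upper.unique h₂.isLeast_inf_upper⟩

theorem tightest_abstraction_unique {ι : Type*}
    (TS TB T1l T1u T2l T2u : Set (ι → Bool)) (VA : Set ι)
    (h1l : IsOver T1l VA) (h1u : IsOver T1u VA)
    (h2l : IsOver T2l VA) (h2u : IsOver T2u VA)
    (h1suff : ∀ C : Set (ι → Bool), IsOver C VA → (TB ∩ C ⊆ TS ↔ TB ∩ C ⊆ T1l))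
    (h1nec : ∀ D : Set (ι → Bool), IsOver D VA → (TB ∩ TS ⊆ D ↔ TB ∩ T1u ⊆ D))
    (h2suff : ∀ C : Set (ι → Bool), IsOver C VA → (TB ∩ C ⊆ TS ↔ TB ∩ C ⊆ T2l))
    (h2nec : ∀ D : Set (ι → Bool), IsOver D VA → (TB ∩ TS ⊆ D ↔ TB ∩ T2u ⊆ D)) :
    TB ∩ T1l = TB ∩ T2l ∧ TB ∩ T1u = TB ∩ T2u := by
  have tightest₁ : IsTightestAbstraction {T | IsOver T VA} TB TS T1l T1u :=
    ⟨h1l, h1u, h1suff, h1nec⟩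
  have tightest₂ : IsTightestAbstraction {T | IsOver T VA} TB TS T2l T2u :=
    ⟨h2l, h2u, h2suff, h2nec⟩
  exact tightest_abstraction_unique_general tightest₁ tightest₂
end

section
/- Let ι be a type of propositional variables, T_S a source theory, T_B a bridging theory, and V_A ⊆ ι a vocabulary. If ⟨T^l, T^u⟩ is an α-abstraction from T_S with respect to T_B over V_A that is exact, i.e., T_B ∩ T^l = T_B ∩ T^u, then ⟨T^l, T^u⟩ is a tightest abstraction from T_S with respect to T_B over V_A: for every theory C over V_A, T_B ∩ C ⊆ T_S if and only if T_B ∩ C ⊆ T^l; and for every theory D over V_A, T_B ∩ T_S ⊆ D if and only if T_B ∩ T^u ⊆ D. -/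
/-!
Applying (i) to `C = T^l` and (ii) to `D = T^u` gives `T_B ∩ T^l ⊆ T_B ∩ T_S ⊆ T_B ∩ T^u`.
Exactness turns these inclusions into equalities, so the three theories are interchangeable modulo
`T_B` in every entailment, whatever its vocabulary.
-/

section SemilatticeInf

variable {α : Type*} [SemilatticeInf α] {b c s l u : α}

theorem inf_le_inf_left_iff_inf_le : b ⊓ c ≤ b ⊓ s ↔ b ⊓ c ≤ s := by
  rw [le_inf_iff, and_iff_right inf_le_left]

theorem inf_le_iff_inf_le_of_inf_eq_inf (h : b ⊓ s = b ⊓ l) :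
    b ⊓ c ≤ s ↔ b ⊓ c ≤ l := by
  rw [← inf_le_inf_left_iff_inf_le, h, inf_le_inf_left_iff_inf_le]

theorem inf_eq_inf_of_inf_le_of_inf_le (hls : b ⊓ l ≤ s) (hsu : b ⊓ s ≤ u)
    (hexact : b ⊓ l = b ⊓ u) : b ⊓ s = b ⊓ l := by
  have hsl : b ⊓ s ≤ l :=
    calc b ⊓ s ≤ b ⊓ u := le_inf inf_le_left hsu
      _ = b ⊓ l := hexact.symm
      _ ≤ l := inf_le_right
  exact inf_congr_left hls hsl

theorem exact_abstraction_is_tightest_general (hls : b ⊓ l ≤ s) (hsu : b ⊓ s ≤ u)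
    (hexact : b ⊓ l = b ⊓ u) :
    (∀ c, b ⊓ c ≤ s ↔ b ⊓ c ≤ l) ∧ (∀ d, b ⊓ s ≤ d ↔ b ⊓ u ≤ d) := by
  have hsl : b ⊓ s = b ⊓ l := inf_eq_inf_of_inf_le_of_inf_le hls hsu hexact
  exact ⟨fun _ => inf_le_iff_inf_le_of_inf_eq_inf hsl, fun _ => by rw [hsl, hexact]⟩

end SemilatticeInf

theorem exact_abstraction_is_tightest {ι : Type*}
    (TS TB Tl Tu : Set (ι → Bool)) (VA : Set ι)
    (hl : IsOver Tl VA) (hu : IsOver Tu VA)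
    (hsuff : ∀ C : Set (ι → Bool), IsOver C VA → TB ∩ C ⊆ Tl → TB ∩ C ⊆ TS)
    (hnec : ∀ D : Set (ι → Bool), IsOver D VA → TB ∩ Tu ⊆ D → TB ∩ TS ⊆ D)
    (hexact : TB ∩ Tl = TB ∩ Tu) :
    (∀ C : Set (ι → Bool), IsOver C VA → (TB ∩ C ⊆ TS ↔ TB ∩ C ⊆ Tl)) ∧
    (∀ D : Set (ι → Bool), IsOver D VA → (TB ∩ TS ⊆ D ↔ TB ∩ Tu ⊆ D)) := by
  obtain ⟨sufficient_iff, necessary_iff⟩ := exact_abstraction_is_tightest_general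
    (hsuff Tl hl Set.inter_subset_right) (hnec Tu hu Set.inter_subset_right) hexact
  exact ⟨fun C _ => sufficient_iff C, fun D _ => necessary_iff D⟩
end
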